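/- Every code C ⊆ (Fin 5)^7 with |C| = 14 and minimum Hamming distance at least 6 can be extended to a code of cardinality 15 with minimum Hamming distance at least 6; that is, there exists a word u ∈ (Fin 5)^7 with u ∉ C such that d_H(u,w) ≥ 6 for all w ∈ C. -/

import Mathlib

lemma aux_five (f : Fin 5 → ℤ) (h : ∀ a, f a = 2 ∨ f a = 3) (hs : ∑ a, f a = 14) :
    ∃ a, ∀ b, f b = 3 - (if a = b then 1 else 0) := by
  rw [Fin.sum_univ_five] at hs
  have h0 := h 0
  have h1 := h 1
  have h2 := h 2
  have h3 := h 3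
  have h4 := h 4
  have : f 0 = 2 ∨ f 1 = 2 ∨ f 2 = 2 ∨ f 3 = 2 ∨ f 4 = 2 := by omega
  rcases this with k | k | k | k | k
  · exact ⟨0, fun b => by fin_cases b <;> simp <;> omega⟩
  · exact ⟨1, fun b => by fin_cases b <;> simp <;> omega⟩
  · exact ⟨2, fun b => by fin_cases b <;> simp <;> omega⟩
  · exact ⟨3, fun b => by fin_cases b <;> simp <;> omega⟩
  · exact ⟨4, fun b => by fin_cases b <;> simp <;> omega⟩

lemma aux_prod (x : ℤ) : 0 ≤ (x - 2) * (x - 3) := by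
  rcases le_or_gt x 2 with h | h
  · nlinarith
  · have : 3 ≤ x := h
    nlinarith

/-- The number of agreements, as a sum of indicators. -/
lemma aux_dist (u v : Fin 7 → Fin 5) :
    (hammingDist u v : ℤ) = 7 - ∑ i, (if u i = v i then (1 : ℤ) else 0) := by
  have h : (hammingDist u v : ℤ) = ∑ i, (if u i = v i then (0 : ℤ) else 1) := by
    simp [hammingDist, Finset.card_filter]
  rw [h, eq_sub_iff_add_eq, ← Finset.sum_add_distrib]
  rw [Finset.sum_congr rfl (g := fun _ => (1 : ℤ))]
  · simp
  · intro i _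
    split_ifs <;> simp

/-- Every `(7,6)_5`-code of cardinality 14 extends to a `(7,6)_5`-code of
cardinality 15: there is a word `u ∉ C` with Hamming distance at least 6 to
every word of `C`. -/
theorem extend_7_6_5_code (C : Finset (Fin 7 → Fin 5)) (hcard : C.card = 14)
    (hC : ∀ u ∈ C, ∀ v ∈ C, u ≠ v → 6 ≤ hammingDist u v) :
    ∃ u : Fin 7 → Fin 5, u ∉ C ∧ ∀ w ∈ C, 6 ≤ hammingDist u w := by
  -- occurrences of the symbol `a` in coordinate `i`
  let n : Fin 7 → Fin 5 → ℤ := fun i a => ∑ v ∈ C, (if a = v i then (1 : ℤ) else 0)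
  have hn : ∀ i, ∑ a, n i a = 14 := by
    intro i
    simp only [n]
    rw [Finset.sum_comm]
    simp [hcard]
  -- each word has at most 20 agreements
  have hR : ∀ u ∈ C, ∑ i, n i (u i) ≤ 20 := by
    intro u hu
    simp only [n]
    rw [Finset.sum_comm]
    have : ∀ v ∈ C, ∑ i, (if u i = v i then (1 : ℤ) else 0) ≤ 1 + (if u = v then 6 else 0) := by
      intro v hv
      have hd := aux_dist u v
      by_cases huv : u = v
      · subst huv
        simp
      · have := hC u hu v hv huv
        simp only [huv, if_false]
        omega
    refine (Finset.sum_le_sum this).trans ?_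
    rw [Finset.sum_add_distrib]
    simp [hcard, hu]
  -- double counting
  have hdc : ∀ i, ∑ u ∈ C, n i (u i) = ∑ a, n i a * n i a := by
    intro i
    have : ∀ a, n i a * n i a = ∑ u ∈ C, (if a = u i then n i a else 0) := by
      intro a
      conv_lhs => rw [show n i a = ∑ v ∈ C, (if a = v i then (1 : ℤ) else 0) from rfl]
      rw [Finset.sum_mul]
      refine Finset.sum_congr rfl fun v _ => ?_
      split_ifs with h
      · simp [n]
      · simp
    rw [Finset.sum_congr rfl fun a _ => this a]
    conv_rhs => rw [Finset.sum_comm]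
    refine Finset.sum_congr rfl fun v _ => ?_
    rw [Finset.sum_ite_eq' Finset.univ (v i) (n i)]
    simp
  have hq : ∀ i, ∑ a, (n i a - 2) * (n i a - 3) = ∑ u ∈ C, n i (u i) - 40 := by
    intro i
    have : ∀ a, (n i a - 2) * (n i a - 3) = n i a * n i a - 5 * n i a + 6 := by
      intro a
      ring
    simp_rw [this]
    rw [Finset.sum_add_distrib, Finset.sum_sub_distrib, ← Finset.mul_sum, hn, hdc]
    simp
    ring
  have hq0 : ∀ i, 0 ≤ ∑ a, (n i a - 2) * (n i a - 3) :=
    fun i => Finset.sum_nonneg fun a _ => aux_prod _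
  have hT : ∑ i, ∑ a, (n i a - 2) * (n i a - 3) = ∑ u ∈ C, (∑ i, n i (u i) - 20) := by
    simp_rw [hq]
    rw [Finset.sum_sub_distrib, Finset.sum_sub_distrib, Finset.sum_comm]
    simp [hcard]
  have hle : ∑ u ∈ C, (∑ i, n i (u i) - 20) ≤ 0 :=
    Finset.sum_nonpos fun u hu => by linarith [hR u hu]
  have hge := Finset.sum_nonneg (s := Finset.univ) fun i _ => hq0 i
  have hR' : ∀ u ∈ C, ∑ i, n i (u i) - 20 = 0 :=
    (Finset.sum_eq_zero_iff_of_nonpos fun u hu => by linarith [hR u hu]).1 (by linarith)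
  have hz : ∀ i ∈ Finset.univ, ∑ a, (n i a - 2) * (n i a - 3) = 0 :=
    (Finset.sum_eq_zero_iff_of_nonneg fun i _ => hq0 i).1 (by linarith)
  have h23 : ∀ i a, n i a = 2 ∨ n i a = 3 := by
    intro i a
    have := (Finset.sum_eq_zero_iff_of_nonneg fun a _ => aux_prod _).1
      (hz i (Finset.mem_univ i)) a (Finset.mem_univ a)
    rcases mul_eq_zero.1 this with h | h
    · left; linarith
    · right; linarith
  choose u hu using fun i => aux_five (n i) (h23 i) (hn i)
  have key : ∀ w ∈ C, hammingDist u w = 6 := by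
    intro w hw
    have h1 := hR' w hw
    simp_rw [hu] at h1
    rw [Finset.sum_sub_distrib] at h1
    have h2 := aux_dist u w
    simp only [Finset.sum_const, Finset.card_univ, Fintype.card_fin, nsmul_eq_mul] at h1
    push_cast at h1
    have : (hammingDist u w : ℤ) = 6 := by linarith
    exact_mod_cast this
  refine ⟨u, fun h => ?_, fun w hw => (key w hw).ge⟩
  have := key u h
  simp at this
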